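/- Let F be a finite field of characteristic p > 5 with |F| = q ≡ −7 or −13 (mod 30), and G = C_3 × D_10. Then FG ≅ F² ⊕ F₂² ⊕ M₂(F₂)³ as F-algebras, where F₂ is the quadratic extension of F. -/

import Mathlib

open DihedralGroup in
/-- The homomorphism from `C₃ × D₁₀` to an algebra given by images of generators. -/
noncomputable def grpHom {L A : Type} [Field L] [Ring A] [Algebra L A] (w : L) (r s : A)
    (hw : w ^ 3 = 1) (hr : r ^ 5 = 1) (hs : s * s = 1) (hrs : r * s = s * r ^ 4) :
    Multiplicative (ZMod 3) × DihedralGroup 5 →* A where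
  toFun g := (w ^ (Multiplicative.toAdd g.1).val) •
    (match g.2 with
      | .r j => r ^ j.val
      | .sr j => s * r ^ j.val)
  map_one' := by
    change w ^ (0 : ZMod 3).val • r ^ (0 : ZMod 5).val = 1
    simp
  map_mul' := by
    have h3 : ∀ i j : ZMod 3, w ^ (i + j).val = w ^ i.val * w ^ j.val := by
      intro i j
      rw [ZMod.val_add, ← pow_add, ← pow_mod_orderOf, ← pow_mod_orderOf w (i.val + j.val),
        Nat.mod_mod_of_dvd _ (orderOf_dvd_of_pow_eq_one hw)]
    have h5 : ∀ i j : ZMod 5, r ^ (i + j).val = r ^ i.val * r ^ j.val := by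
      intro i j
      rw [ZMod.val_add, ← pow_add, ← pow_mod_orderOf, ← pow_mod_orderOf r (i.val + j.val),
        Nat.mod_mod_of_dvd _ (orderOf_dvd_of_pow_eq_one hr)]
    have hn : ∀ n : ℕ, r ^ n * s = s * (r ^ 4) ^ n := by
      intro n
      have : SemiconjBy s (r ^ 4) r := hrs.symm
      exact (this.pow_right n).symm
    have h4 : ∀ j : ZMod 5, (r ^ 4) ^ j.val = r ^ (-j).val := by
      intro j
      have e : (4 * j.val) % 5 = (-j).val := by revert j; decide
      rw [← pow_mul, ← e, ← pow_mod_orderOf, ← pow_mod_orderOf r (4 * j.val % 5),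
        Nat.mod_mod_of_dvd _ (orderOf_dvd_of_pow_eq_one hr)]
    rintro ⟨i, g⟩ ⟨j, h⟩
    have e3 : w ^ (Multiplicative.toAdd (i * j)).val
      = w ^ (Multiplicative.toAdd i).val * w ^ (Multiplicative.toAdd j).val := h3 _ _
    rcases g with g | g <;> rcases h with h | h <;>
      simp only [Prod.mk_mul_mk, r_mul_r, r_mul_sr, sr_mul_r, sr_mul_sr, e3,
        smul_mul_smul_comm] <;> congr 1
    · exact h5 _ _
    · rw [← mul_assoc, hn, mul_assoc, h4, ← h5, sub_eq_neg_add]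
    · rw [h5, mul_assoc]
    · rw [mul_assoc, ← mul_assoc _ s, hn, mul_assoc, ← mul_assoc, hs, one_mul, h4, ← h5,
        sub_eq_neg_add]

lemma dihedral_sum {M : Type} [AddCommMonoid M] (h : DihedralGroup 5 → M) :
    ∑ g, h g = ∑ j : ZMod 5, h (.r j) + ∑ j : ZMod 5, h (.sr j) := by
  rw [← Fintype.sum_equiv (DihedralGroup.equivSum (n := 5)).symm
    (fun x => h (DihedralGroup.equivSum.symm x)) h (fun _ => rfl), Fintype.sum_sum_type]
  rfl

lemma zmod5_sum {M : Type} [AddCommMonoid M] (h : ZMod 5 → M) :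
    ∑ j, h j = h 0 + h 1 + h 2 + h 3 + h 4 := Fin.sum_univ_five h

lemma zmod3_sum {M : Type} [AddCommMonoid M] (h : ZMod 3 → M) :
    ∑ j, h j = h 0 + h 1 + h 2 := Fin.sum_univ_three h

/-- Coefficient of `j`-th element, twisted by the cubic character. -/
noncomputable def twist {F L : Type} [Field F] [Field L] [Algebra F L] (w : L)
    (x : MonoidAlgebra F (Multiplicative (ZMod 3) × DihedralGroup 5)) (g : DihedralGroup 5) : L :=
  algebraMap F L (x.coeff (Multiplicative.ofAdd 0, g))
    + algebraMap F L (x.coeff (Multiplicative.ofAdd 1, g)) * w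
    + algebraMap F L (x.coeff (Multiplicative.ofAdd 2, g)) * w ^ 2

lemma lift_grpHom {F L A : Type} [Field F] [Field L] [Ring A] [Algebra F L] [Algebra L A]
    [Algebra F A] [IsScalarTower F L A] (w : L) (r s : A)
    (hw : w ^ 3 = 1) (hr : r ^ 5 = 1) (hs : s * s = 1) (hrs : r * s = s * r ^ 4)
    (x : MonoidAlgebra F (Multiplicative (ZMod 3) × DihedralGroup 5)) :
    MonoidAlgebra.lift F A _ (grpHom w r s hw hr hs hrs) x =
      (twist w x (.r 0) • 1 + twist w x (.r 1) • r + twist w x (.r 2) • r ^ 2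
        + twist w x (.r 3) • r ^ 3 + twist w x (.r 4) • r ^ 4) +
      s * (twist w x (.sr 0) • 1 + twist w x (.sr 1) • r + twist w x (.sr 2) • r ^ 2
        + twist w x (.sr 3) • r ^ 3 + twist w x (.sr 4) • r ^ 4) := by
  have key : ∀ (g : DihedralGroup 5) (a : A),
      ∑ i : ZMod 3, x.coeff (Multiplicative.ofAdd i, g) • (w ^ i.val • a) = twist w x g • a := by
    intro g a
    rw [zmod3_sum]
    have v2 : (2 : ZMod 3).val = 2 := rfl
    have v1 : (1 : ZMod 3).val = 1 := rfl
    have v0 : (0 : ZMod 3).val = 0 := rfl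
    simp only [v0, v1, v2, pow_zero, pow_one, twist, add_smul, mul_smul, algebraMap_smul, one_smul]
  have v4 : (4 : ZMod 5).val = 4 := rfl
  have v3 : (3 : ZMod 5).val = 3 := rfl
  have v2 : (2 : ZMod 5).val = 2 := rfl
  have v1 : (1 : ZMod 5).val = 1 := rfl
  have v0 : (0 : ZMod 5).val = 0 := rfl
  rw [MonoidAlgebra.lift_apply, Finsupp.sum_fintype _ _ (by simp), Fintype.sum_prod_type_right,
    dihedral_sum]
  have e1 : ∀ j : ZMod 5, ∑ i : Multiplicative (ZMod 3), x.coeff (i, DihedralGroup.r j) •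
      grpHom w r s hw hr hs hrs (i, .r j) = twist w x (.r j) • r ^ j.val := fun j => key _ _
  have e2 : ∀ j : ZMod 5, ∑ i : Multiplicative (ZMod 3), x.coeff (i, DihedralGroup.sr j) •
      grpHom w r s hw hr hs hrs (i, .sr j) = twist w x (.sr j) • (s * r ^ j.val) :=
    fun j => key _ _
  simp only [e1, e2, zmod5_sum, v0, v1, v2, v3, v4, pow_zero, pow_one, mul_add, mul_smul_comm]

/-- Rotation matrix. -/
def rotM {K : Type} [Field K] (α : K) : Matrix (Fin 2) (Fin 2) K := !![0, -1; 1, α]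
/-- Reflection matrix. -/
def refM (K : Type) [Field K] : Matrix (Fin 2) (Fin 2) K := !![0, 1; 1, 0]

lemma rot2 {K : Type} [Field K] {α : K} (hα : α ^ 2 + α - 1 = 0) : rotM α ^ 2 = !![-1, -α; α, -α] := by
  rw [pow_two, rotM, Matrix.mul_fin_two]
  congr! 3 <;> grind
lemma rot3 {K : Type} [Field K] {α : K} (hα : α ^ 2 + α - 1 = 0) : rotM α ^ 3 = !![-α, α; -α, -1] := by
  rw [pow_succ, rot2 hα, rotM, Matrix.mul_fin_two]
  congr! 3 <;> grind
lemma rot4 {K : Type} [Field K] {α : K} (hα : α ^ 2 + α - 1 = 0) : rotM α ^ 4 = !![α, 1; -1, 0] := by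
  rw [pow_succ, rot3 hα, rotM, Matrix.mul_fin_two]
  congr! 3 <;> grind
lemma rot5 {K : Type} [Field K] {α : K} (hα : α ^ 2 + α - 1 = 0) : rotM α ^ 5 = 1 := by
  rw [pow_succ, rot4 hα, rotM, Matrix.mul_fin_two, Matrix.one_fin_two]
  congr! 3 <;> grind
lemma ref2 {K : Type} [Field K] : refM K * refM K = 1 := by
  rw [refM, Matrix.mul_fin_two, Matrix.one_fin_two]
  simp
lemma rotref {K : Type} [Field K] {α : K} (hα : α ^ 2 + α - 1 = 0) : rotM α * refM K = refM K * rotM α ^ 4 := by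
  rw [rot4 hα, refM, rotM, Matrix.mul_fin_two, Matrix.mul_fin_two]
  congr! 3 <;> grind

lemma mat_key {K : Type} [Field K] {α : K} (hα : α ^ 2 + α - 1 = 0)
    (h5 : (5 : K) ≠ 0) (y0 y1 y2 y3 y4 z0 z1 z2 z3 z4 : K)
    (h : (y0 • 1 + y1 • rotM α + y2 • rotM α ^ 2 + y3 • rotM α ^ 3 + y4 • rotM α ^ 4) +
      refM K * (z0 • 1 + z1 • rotM α + z2 • rotM α ^ 2 + z3 • rotM α ^ 3 + z4 • rotM α ^ 4) = 0) :
    (y0 - y2 - α * y3 + α * y4 = 0 ∧ y1 + α * y2 - α * y3 - y4 = 0) ∧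
    (z0 - z2 - α * z3 + α * z4 = 0 ∧ z1 + α * z2 - α * z3 - z4 = 0) := by
  rw [rot2 hα, rot3 hα, rot4 hα, Matrix.one_fin_two, rotM, refM] at h
  have h00 := congrFun (congrFun h 0) 0
  have h01 := congrFun (congrFun h 0) 1
  have h10 := congrFun (congrFun h 1) 0
  have h11 := congrFun (congrFun h 1) 1
  simp at h00 h01 h10 h11
  obtain ⟨U, hU⟩ : ∃ U, U = y0 - y2 - α * y3 + α * y4 := ⟨_, rfl⟩
  obtain ⟨V, hV⟩ : ∃ V, V = y1 + α * y2 - α * y3 - y4 := ⟨_, rfl⟩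
  obtain ⟨W, hW⟩ : ∃ W, W = z0 - z2 - α * z3 + α * z4 := ⟨_, rfl⟩
  obtain ⟨X, hX⟩ : ∃ X, X = z1 + α * z2 - α * z3 - z4 := ⟨_, rfl⟩
  have k1 : U + X = 0 := by rw [hU, hX]; linear_combination h00
  have k2 : V + W = 0 := by rw [hV, hW]; linear_combination h10
  have k3 : -V + W + α * X = 0 := by
    rw [hV, hW, hX]; linear_combination h01 + (z2 - z3) * hα
  have k4 : U + α * V - X = 0 := by
    rw [hV, hU, hX]; linear_combination h11 + (y2 - y3) * hα
  have hUz : U = 0 := by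
    have : 5 * U = 0 := by grind
    exact (mul_eq_zero.1 this).resolve_left h5
  have hVz : V = 0 := by
    have : 5 * V = 0 := by grind
    exact (mul_eq_zero.1 this).resolve_left h5
  rw [← hU, ← hV, ← hW, ← hX]
  exact ⟨⟨hUz, hVz⟩, by simpa [hVz] using k2, by simpa [hUz] using k1⟩

/-- An injectivity statement, coefficientwise. -/
lemma coeff_key {F K : Type} [Field F] [Field K] [Algebra F K] (h3 : (3 : F) ≠ 0)
    (h5 : (5 : F) ≠ 0) (w α : K) (hw : w ^ 2 + w + 1 = 0) (hα : α ^ 2 + α - 1 = 0)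
    (iw : ∀ a b : F, algebraMap F K a + algebraMap F K b * w = 0 → a = 0 ∧ b = 0)
    (iα : ∀ a b : F, algebraMap F K a + algebraMap F K b * α = 0 → a = 0 ∧ b = 0)
    (f : Fin 3 → Fin 5 → F) (y z : Fin 5 → K)
    (hy : ∀ j, y j = algebraMap F K (f 0 j) + algebraMap F K (f 1 j) * w
      + algebraMap F K (f 2 j) * w ^ 2)
    (hz : ∀ j, z j = algebraMap F K (f 0 j) + algebraMap F K (f 1 j) * 1
      + algebraMap F K (f 2 j) * 1 ^ 2)
    (e1 : ∑ i, ∑ j, f i j = 0)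
    (e2 : ∑ j, y j = 0)
    (e5 : z 0 - z 2 - α * z 3 + α * z 4 = 0) (e5' : z 1 + α * z 2 - α * z 3 - z 4 = 0)
    (e6 : y 0 - y 2 - α * y 3 + α * y 4 = 0) (e6' : y 1 + α * y 2 - α * y 3 - y 4 = 0)
    (e7 : y 0 - y 2 - (-1 - α) * y 3 + (-1 - α) * y 4 = 0)
    (e7' : y 1 + (-1 - α) * y 2 - (-1 - α) * y 3 - y 4 = 0) :
    ∀ i j, f i j = 0 := by
  have h5K : (5 : K) ≠ 0 := by
    rw [← map_ofNat (algebraMap F K) 5]; exact (map_ne_zero _).2 h5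
  have hδ : 2 * α + 1 ≠ 0 := by
    intro h
    apply h5K
    linear_combination (2 * α + 1) * h - 4 * hα
  -- the twisted sums are all equal, hence zero
  have y34 : y 4 - y 3 = 0 := by
    have : (2 * α + 1) * (y 4 - y 3) = 0 := by linear_combination e6 - e7
    exact (mul_eq_zero.1 this).resolve_left hδ
  have y23 : y 2 - y 3 = 0 := by
    have : (2 * α + 1) * (y 2 - y 3) = 0 := by linear_combination e6' - e7'
    exact (mul_eq_zero.1 this).resolve_left hδ
  have y02 : y 0 - y 2 = 0 := by linear_combination e6 - α * y34
  have y14 : y 1 - y 4 = 0 := by linear_combination e6' - α * y23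
  have y3 : y 3 = 0 := by
    have : 5 * y 3 = 0 := by
      rw [Fin.sum_univ_five] at e2
      linear_combination e2 - y02 - 2 * y23 - y14 - 2 * y34
    exact (mul_eq_zero.1 this).resolve_left h5K
  have yall : ∀ j, y j = 0 := by
    intro j
    fin_cases j
    · change y 0 = 0; linear_combination y02 + y23 + y3
    · change y 1 = 0; linear_combination y14 + y34 + y3
    · change y 2 = 0; linear_combination y23 + y3
    · exact y3
    · change y 4 = 0; linear_combination y34 + y3
  have fi : ∀ j, f 0 j = f 2 j ∧ f 1 j = f 2 j := by
    intro j
    have h := yall j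
    rw [hy] at h
    have := iw (f 0 j - f 2 j) (f 1 j - f 2 j) (by
      rw [map_sub, map_sub]; linear_combination h - algebraMap F K (f 2 j) * hw)
    exact ⟨sub_eq_zero.1 this.1, sub_eq_zero.1 this.2⟩
  have zj : ∀ j, z j = 3 * algebraMap F K (f 2 j) := by
    intro j
    rw [hz, (fi j).1, (fi j).2]; ring
  have a1 := iα (3 * (f 2 0 - f 2 2)) (3 * (f 2 4 - f 2 3)) (by
    simp only [zj] at e5
    simp only [map_mul, map_sub, map_ofNat]
    linear_combination e5)
  have a2 := iα (3 * (f 2 1 - f 2 4)) (3 * (f 2 2 - f 2 3)) (by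
    simp only [zj] at e5'
    simp only [map_mul, map_sub, map_ofNat]
    linear_combination e5')
  have b1 := (mul_eq_zero.1 a1.1).resolve_left h3
  have b2 := (mul_eq_zero.1 a1.2).resolve_left h3
  have b3 := (mul_eq_zero.1 a2.1).resolve_left h3
  have b4 := (mul_eq_zero.1 a2.2).resolve_left h3
  have f3 : f 2 3 = 0 := by
    have : 3 * (5 * f 2 3) = 0 := by
      simp only [Fin.sum_univ_five, Fin.sum_univ_three, (fi _).1, (fi _).2] at e1
      linear_combination e1 - 3 * (b1 + 2 * b4 + b3 + 2 * b2)
    exact (mul_eq_zero.1 ((mul_eq_zero.1 this).resolve_left h3)).resolve_left h5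
  have f2 : ∀ j, f 2 j = 0 := by
    intro j
    fin_cases j
    · change f 2 0 = 0; linear_combination b1 + b4 + f3
    · change f 2 1 = 0; linear_combination b3 + b2 + f3
    · change f 2 2 = 0; linear_combination b4 + f3
    · exact f3
    · change f 2 4 = 0; linear_combination b2 + f3
  intro i j
  fin_cases i
  · exact (fi j).1.trans (f2 j)
  · exact (fi j).2.trans (f2 j)
  · exact f2 j

lemma indep_of_not_mem {F K : Type} [Field F] [Field K] [Algebra F K] (w : K)
    (h : ∀ c : F, algebraMap F K c ≠ w) (a b : F)
    (e : algebraMap F K a + algebraMap F K b * w = 0) : a = 0 ∧ b = 0 := by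
  by_cases hb : b = 0
  · subst hb; simpa using e
  · exfalso
    apply h (-a / b)
    have hb' : algebraMap F K b ≠ 0 := (map_ne_zero _).2 hb
    rw [map_div₀, map_neg, div_eq_iff hb']
    linear_combination -e

instance fact_prime_five' : Fact (Nat.Prime 5) := ⟨by norm_num⟩

lemma exists_roots (F : Type) [Field F] [Fintype F] (h2 : (2 : F) ≠ 0) (h3 : (3 : F) ≠ 0)
    (h5 : (5 : F) ≠ 0)
    (hq : Fintype.card F % 30 = 23 ∨ Fintype.card F % 30 = 17)
    (K : Type) [Field K] [Algebra F K] (hK : Module.finrank F K = 2) :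
    ∃ w α : K, w ^ 2 + w + 1 = 0 ∧ α ^ 2 + α - 1 = 0 ∧ (∀ c : F, algebraMap F K c ≠ w) ∧
      (∀ c : F, algebraMap F K c ≠ α) := by
  classical
  have hfin : Module.Finite F K := Module.finite_of_finrank_pos (by omega)
  have : Finite K := Module.finite_of_finite F
  have : Fintype K := Fintype.ofFinite K
  have hcard : Fintype.card K = Fintype.card F ^ 2 := by
    rw [Module.card_eq_pow_finrank (K := F) (V := K), hK]
  have h2K : (2 : K) ≠ 0 := by
    rw [← map_ofNat (algebraMap F K) 2]; exact (map_ne_zero _).2 h2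
  have hchK : ringChar K ≠ 2 := by
    intro h
    have := ringChar.Nat.cast_ringChar (R := K)
    rw [h] at this
    exact h2K (by exact_mod_cast this)
  have hchF : ringChar F ≠ 2 := by
    intro h
    have := ringChar.Nat.cast_ringChar (R := F)
    rw [h] at this
    exact h2 (by exact_mod_cast this)
  have sq : ∀ a : F, a ≠ 0 → ∃ b : K, algebraMap F K a = b * b := by
    intro a ha
    have := (FiniteField.isSquare_iff hchK ((map_ne_zero (algebraMap F K)).2 ha)).2 (by
      obtain ⟨m, hm⟩ : ∃ m, Fintype.card F = 2 * m + 1 := ⟨Fintype.card F / 2, by omega⟩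
      have : Fintype.card K / 2 = (Fintype.card F - 1) * (m + 1) := by
        rw [hcard, hm]
        have : (2 * m + 1) ^ 2 = 2 * (2 * m * (m + 1)) + 1 := by ring
        rw [this, Nat.add_sub_cancel]
        omega
      rw [this, ← map_pow, pow_mul, FiniteField.pow_card_sub_one_eq_one a ha, one_pow, map_one])
    exact this
  obtain ⟨d, hd⟩ := sq 5 h5
  obtain ⟨e, he⟩ := sq (-3) (neg_ne_zero.2 h3)
  simp only [map_neg, map_ofNat] at hd he
  refine ⟨(e - 1) / 2, (d - 1) / 2, ?_, ?_, ?_, ?_⟩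
  · field_simp
    linear_combination -he
  · field_simp
    linear_combination -hd
  · intro c hc
    rw [eq_div_iff h2K] at hc
    have hc2 : c ^ 2 + c + 1 = 0 := by
      apply (algebraMap F K).injective
      have : 4 * (algebraMap F K c ^ 2 + algebraMap F K c + 1) = 0 := by
        have : e = 2 * algebraMap F K c + 1 := by linear_combination -hc
        rw [this] at he
        linear_combination -he
      have h4 : (4 : K) ≠ 0 := by
        have : (4 : K) = 2 * 2 := by norm_num
        rw [this]; exact mul_ne_zero h2K h2K
      simpa using (mul_eq_zero.1 this).resolve_left h4
    have c3 : c ^ 3 = 1 := by linear_combination (c - 1) * hc2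
    have c1 : c ≠ 1 := by
      rintro rfl
      apply h3
      linear_combination hc2
    have c0 : c ≠ 0 := by
      rintro rfl
      simp at hc2
    have ho : orderOf c = 3 := orderOf_eq_prime c3 c1
    have := orderOf_dvd_of_pow_eq_one (FiniteField.pow_card_sub_one_eq_one c c0)
    rw [ho] at this
    omega
  · intro c hc
    rw [eq_div_iff h2K] at hc
    have hsq : IsSquare ((5 : ℕ) : F) := by
      refine ⟨2 * c + 1, (algebraMap F K).injective ?_⟩
      have : d = 2 * algebraMap F K c + 1 := by linear_combination -hc
      rw [this] at hd
      simp only [Nat.cast_ofNat, map_mul, map_add, map_ofNat, map_one]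
      exact hd
    rw [FiniteField.isSquare_odd_prime_iff hchF (by norm_num)] at hsq
    apply hsq
    have q5 : ((Fintype.card F : ℕ) : ZMod 5) = ((Fintype.card F % 5 : ℕ) : ZMod 5) := by simp
    have q4 : ZMod.χ₄ (Fintype.card F) = 1 ∨ ZMod.χ₄ (Fintype.card F) = -1 := by
      rw [ZMod.χ₄_nat_eq_if_mod_four]
      have : Fintype.card F % 2 ≠ 0 := by omega
      simp only [this, if_false]
      split_ifs <;> simp
    rw [q5]
    have : Fintype.card F % 5 = 3 ∨ Fintype.card F % 5 = 2 := by omega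
    rcases q4 with h | h <;> rcases this with h' | h' <;> rw [h, h'] <;> decide

/-- For `F` a finite field of characteristic `p > 5` with `q ≡ 23, 17 (mod 30)`,
`F₂` the quadratic extension of `F`, and `G = C₃ × D₁₀`:
`FG ≅ F² ⊕ F₂² ⊕ M₂(F₂)³` as `F`-algebras. -/
theorem stmt_19 (F : Type) [Field F] [Fintype F] (p : ℕ) (hchar : CharP F p) (hp : 5 < p)
    (hq : Fintype.card F % 30 = 23 ∨ Fintype.card F % 30 = 17)
    (K : Type) [Field K] [Algebra F K] (hK : Module.finrank F K = 2) :
    let G := Multiplicative (ZMod 3) × DihedralGroup 5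
    Nonempty (MonoidAlgebra F G ≃ₐ[F]
      ((Fin 2 → F) × (Fin 2 → K) × (Fin 3 → Matrix (Fin 2) (Fin 2) K))) := by
  intro G
  have hne : ∀ n : ℕ, 0 < n → n < p → (n : F) ≠ 0 := by
    intro n hn hnp h
    exact absurd (Nat.le_of_dvd hn ((CharP.cast_eq_zero_iff F p n).1 h)) (by omega)
  have h2 : (2 : F) ≠ 0 := by exact_mod_cast hne 2 (by omega) (by omega)
  have h3 : (3 : F) ≠ 0 := by exact_mod_cast hne 3 (by omega) (by omega)
  have h5 : (5 : F) ≠ 0 := by exact_mod_cast hne 5 (by omega) (by omega)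
  have h2K : (2 : K) ≠ 0 := by rw [← map_ofNat (algebraMap F K) 2]; exact (map_ne_zero _).2 h2
  have h5K : (5 : K) ≠ 0 := by rw [← map_ofNat (algebraMap F K) 5]; exact (map_ne_zero _).2 h5
  obtain ⟨w, α, hw, hα, nw, nα⟩ := exists_roots F h2 h3 h5 hq K hK
  have hα' : (-1 - α) ^ 2 + (-1 - α) - 1 = 0 := by linear_combination hα
  have hw3 : w ^ 3 = 1 := by linear_combination (w - 1) * hw
  have hfin : Module.Finite F K := Module.finite_of_finrank_pos (by omega)
  let l1 : MonoidAlgebra F G →ₐ[F] F := MonoidAlgebra.lift F F G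
    (grpHom (1 : F) (1 : F) (1 : F) (by simp) (by simp) (by simp) (by simp))
  let l2 : MonoidAlgebra F G →ₐ[F] F := MonoidAlgebra.lift F F G
    (grpHom (1 : F) (1 : F) (-1 : F) (by simp) (by simp) (by simp) (by simp))
  let l3 : MonoidAlgebra F G →ₐ[F] K := MonoidAlgebra.lift F K G
    (grpHom w (1 : K) (1 : K) hw3 (by simp) (by simp) (by simp))
  let l4 : MonoidAlgebra F G →ₐ[F] K := MonoidAlgebra.lift F K G
    (grpHom w (1 : K) (-1 : K) hw3 (by simp) (by simp) (by simp))
  let l5 : MonoidAlgebra F G →ₐ[F] Matrix (Fin 2) (Fin 2) K := MonoidAlgebra.lift F _ G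
    (grpHom (1 : K) (rotM α) (refM K) (by simp) (rot5 hα) ref2 (rotref hα))
  let l6 : MonoidAlgebra F G →ₐ[F] Matrix (Fin 2) (Fin 2) K := MonoidAlgebra.lift F _ G
    (grpHom w (rotM α) (refM K) hw3 (rot5 hα) ref2 (rotref hα))
  let l7 : MonoidAlgebra F G →ₐ[F] Matrix (Fin 2) (Fin 2) K := MonoidAlgebra.lift F _ G
    (grpHom w (rotM (-1 - α)) (refM K) hw3 (rot5 hα') ref2 (rotref hα'))
  let Φ : MonoidAlgebra F G →ₐ[F]
      ((Fin 2 → F) × (Fin 2 → K) × (Fin 3 → Matrix (Fin 2) (Fin 2) K)) :=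
    (AlgHom.pi ![l1, l2]).prod
      ((AlgHom.pi ![l3, l4]).prod (AlgHom.pi ![l5, l6, l7]))
  have hinj : Function.Injective Φ := by
    rw [injective_iff_map_eq_zero]
    intro x hx
    have x1 : l1 x = 0 := congrFun (congrArg Prod.fst hx) 0
    have x2 : l2 x = 0 := congrFun (congrArg Prod.fst hx) 1
    have x3 : l3 x = 0 := congrFun (congrArg (fun t => t.2.1) hx) 0
    have x4 : l4 x = 0 := congrFun (congrArg (fun t => t.2.1) hx) 1
    have x5 : l5 x = 0 := congrFun (congrArg (fun t => t.2.2) hx) 0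
    have x6 : l6 x = 0 := congrFun (congrArg (fun t => t.2.2) hx) 1
    have x7 : l7 x = 0 := congrFun (congrArg (fun t => t.2.2) hx) 2
    simp only [l1, l2, l3, l4, l5, l6, l7] at x1 x2 x3 x4 x5 x6 x7
    rw [lift_grpHom] at x1 x2 x3 x4 x5 x6 x7
    have k5 := mat_key hα h5K _ _ _ _ _ _ _ _ _ _ x5
    have k6 := mat_key hα h5K _ _ _ _ _ _ _ _ _ _ x6
    have k7 := mat_key hα' h5K _ _ _ _ _ _ _ _ _ _ x7
    simp only [one_pow, smul_eq_mul, mul_one, one_mul, neg_one_mul] at x1 x2 x3 x4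
    have iw := indep_of_not_mem w nw
    have iα := indep_of_not_mem α nα
    have cr : ∀ (i : Fin 3) (j : Fin 5),
        x.coeff ((Multiplicative.ofAdd (i : ZMod 3), DihedralGroup.r (j : ZMod 5)) : G) = 0 := by
      refine coeff_key h3 h5 w α hw hα iw iα
        (fun i j => x.coeff (Multiplicative.ofAdd (i : ZMod 3), DihedralGroup.r (j : ZMod 5)))
        (fun j => twist w x (.r j)) (fun j => twist 1 x (.r j)) (fun j => rfl) (fun j => rfl)
        ?_ ?_ k5.1.1 k5.1.2 k6.1.1 k6.1.2 k7.1.1 k7.1.2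
      · have : ∑ j : Fin 5, twist (1 : F) x (.r j) = 0 := by
          rw [Fin.sum_univ_five]
          refine (mul_eq_zero.1 ?_).resolve_left h2
          linear_combination x1 + x2
        rw [← this, Finset.sum_comm]
        refine Finset.sum_congr rfl fun j _ => ?_
        rw [Fin.sum_univ_three]
        simp only [twist, one_pow, mul_one]
        rfl
      · rw [Fin.sum_univ_five]
        refine (mul_eq_zero.1 ?_).resolve_left h2K
        linear_combination x3 + x4
    have cs : ∀ (i : Fin 3) (j : Fin 5),
        x.coeff ((Multiplicative.ofAdd (i : ZMod 3), DihedralGroup.sr (j : ZMod 5)) : G) = 0 := by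
      refine coeff_key h3 h5 w α hw hα iw iα
        (fun i j => x.coeff (Multiplicative.ofAdd (i : ZMod 3), DihedralGroup.sr (j : ZMod 5)))
        (fun j => twist w x (.sr j)) (fun j => twist 1 x (.sr j)) (fun j => rfl) (fun j => rfl)
        ?_ ?_ k5.2.1 k5.2.2 k6.2.1 k6.2.2 k7.2.1 k7.2.2
      · have : ∑ j : Fin 5, twist (1 : F) x (.sr j) = 0 := by
          rw [Fin.sum_univ_five]
          refine (mul_eq_zero.1 ?_).resolve_left h2
          linear_combination x1 - x2
        rw [← this, Finset.sum_comm]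
        refine Finset.sum_congr rfl fun j _ => ?_
        rw [Fin.sum_univ_three]
        simp only [twist, one_pow, mul_one]
        rfl
      · rw [Fin.sum_univ_five]
        refine (mul_eq_zero.1 ?_).resolve_left h2K
        linear_combination x3 - x4
    ext ⟨i, g⟩
    rcases g with j | j
    · exact cr i j
    · exact cs i j
  have hdim : Module.finrank F (MonoidAlgebra F G) = Module.finrank F
      ((Fin 2 → F) × (Fin 2 → K) × (Fin 3 → Matrix (Fin 2) (Fin 2) K)) := by
    have e1 : Module.finrank F (MonoidAlgebra F G) = 30 := by
      rw [(MonoidAlgebra.coeffLinearEquiv F).finrank_eq, Module.finrank_finsupp_self]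
      simp [G, Fintype.card_prod, DihedralGroup.card]
    rw [e1]
    have e2 : Module.finrank F (Matrix (Fin 2) (Fin 2) K) = 8 := by
      rw [Module.finrank_matrix, hK]; simp
    have hfm : Module.Finite F (Matrix (Fin 2) (Fin 2) K) :=
      Module.finite_of_finrank_pos (by omega)
    have e3 : Module.finrank F (Fin 3 → Matrix (Fin 2) (Fin 2) K) = 24 := by
      rw [Module.finrank_pi_fintype]; simp only [e2]; simp
    have e4 : Module.finrank F (Fin 2 → K) = 4 := by
      rw [Module.finrank_pi_fintype]; simp [hK]
    rw [Module.finrank_prod, Module.finrank_prod, e3, e4]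
    simp
  have hfinA : Module.Finite F (MonoidAlgebra F G) :=
    Module.Finite.equiv (MonoidAlgebra.coeffLinearEquiv F).symm
  have hbij : Function.Bijective Φ :=
    ⟨hinj, (LinearMap.injective_iff_surjective_of_finrank_eq_finrank hdim
      (f := Φ.toLinearMap)).1 hinj⟩
  exact ⟨AlgEquiv.ofBijective Φ hbij⟩
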